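/- Let I ⊆ ℝ be an interval, E a Banach space, F = End(E), G̃ : I → F continuous and of bounded variation with respect to F, and f : I → ℝ locally absolutely continuous with f(I) bounded. Define A : I → F by A(t) = f'(t) G̃(t). Then A is bistable in E: there exists C > 0 such that for every evolution operator X for A in E and all s, t ∈ I, ‖X(t, s)‖ ≤ C. -/

import Mathlib

open MeasureTheory Set intervalIntegral

/-- `f` is absolutely continuous on the set `s`: for every `ε > 0` there is `δ > 0` such
that for every finite family of non-overlapping subintervals of `s` of total length `< δ`,
the total variation of `f` over them is `< ε`. -/
def AbsolutelyContinuousOn (f : ℝ → ℝ) (s : Set ℝ) : Prop :=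
  ∀ ε > (0 : ℝ), ∃ δ > (0 : ℝ), ∀ n : ℕ, ∀ u v : ℕ → ℝ,
    (∀ i < n, u i ∈ s ∧ v i ∈ s ∧ u i ≤ v i) →
    (∀ i < n, ∀ j < n, i ≠ j → Set.Ioo (u i) (v i) ∩ Set.Ioo (u j) (v j) = ∅) →
    (∑ i ∈ Finset.range n, (v i - u i)) < δ →
    (∑ i ∈ Finset.range n, |f (v i) - f (u i)|) < ε

/-- `f` is locally absolutely continuous on the interval `I`: absolutely continuous on
every compact subinterval of `I`. -/
def LocallyAbsolutelyContinuousOn (f : ℝ → ℝ) (I : Set ℝ) : Prop :=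
  ∀ a ∈ I, ∀ b ∈ I, AbsolutelyContinuousOn f (Set.Icc a b)

/-- `f'` is the derivative of `f` relative to `I`, in the convention of the paper:
it is the derivative at points of differentiability and `0` elsewhere. -/
def IsDerivWithinOf (f' f : ℝ → ℝ) (I : Set ℝ) : Prop :=
  ∀ t ∈ I, (DifferentiableWithinAt ℝ f I t → HasDerivWithinAt f (f' t) I t) ∧
    (¬ DifferentiableWithinAt ℝ f I t → f' t = 0)

/-- `y ∈ L^∞_loc(J; E)`: `y` is Bochner measurable on `J` and essentially bounded on
every compact subinterval of `J`. -/
def LocEssBdd {E : Type*} [NormedAddCommGroup E] (y : ℝ → E) (J : Set ℝ) : Prop :=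
  AEStronglyMeasurable y (volume.restrict J) ∧
  ∀ a ∈ J, ∀ b ∈ J, ∃ M : ℝ, ∀ᵐ t ∂(volume.restrict (Set.uIcc a b)), ‖y t‖ ≤ M

/-- An evolution operator for `A` in `E` on the interval `I`: for each `s ∈ I`,
`X(·, s)` is a continuous operator solution of `X' = A ∘ X` with `X(s,s) = id`. -/
def IsEvolutionOperator {E : Type*} [NormedAddCommGroup E] [NormedSpace ℝ E]
    (I : Set ℝ) (A : ℝ → E →L[ℝ] E) (X : ℝ → ℝ → E →L[ℝ] E) : Prop :=
  ∀ s ∈ I, ContinuousOn (fun t => X t s) I ∧ X s s = ContinuousLinearMap.id ℝ E ∧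
    ∀ u ∈ I, ∀ t ∈ I, X t s - X u s = ∫ τ in u..t, (A τ).comp (X τ s)

/-- The set of partition sums defining the total variation of `G : I → F`. -/
def varSums {F : Type*} [NormedAddCommGroup F] (G : ℝ → F) (I : Set ℝ) : Set ℝ :=
  {v | ∃ n : ℕ, ∃ a : ℕ → ℝ, (∀ i ≤ n, a i ∈ I) ∧ (∀ i < n, a i < a (i + 1)) ∧
    v = ∑ i ∈ Finset.range n, ‖G (a (i + 1)) - G (a i)‖}

/-!
If `G̃` were constant, every solution of `x' = f' G̃ x` would make `exp (-f G̃) x` constant, and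
boundedness of `f` and `G̃` would finish the argument. In general, freeze `G̃` at the endpoint `a`
of a short interval `[a, b]`: then `x b = exp ((f b - f a) G̃ a) (x a) + o(1) ∫ |f'|`, uniformly in
`a`, so that `exp (-f b G̃ a) (x b)` agrees with `exp (-f a G̃ a) (x a)` up to `o(1) ∫ |f'|`.
Replacing `G̃ a` by `G̃ b` in the first expression costs a factor `exp (C ‖G̃ b - G̃ a‖)`, since
`f` is bounded. Along a subdivision these factors multiply to at most `exp (C Var G̃)` and the
errors sum to `o(1) ∫ |f'|`, which vanishes as the mesh tends to zero. Hence `‖exp (-f G̃) x‖`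
grows by at most the factor `exp (C Var G̃)`, whatever the interval.
-/

open NormedSpace (exp exp_zero exp_add_of_commute exp_series_hasSum_exp')

theorem norm_smul_le_of_le {𝕜 F : Type*} [SeminormedRing 𝕜] [SeminormedAddCommGroup F]
    [Module 𝕜 F] [IsBoundedSMul 𝕜 F] {c : 𝕜} {x : F} {M K : ℝ} (hc : ‖c‖ ≤ M) (hx : ‖x‖ ≤ K) :
    ‖c • x‖ ≤ M * K :=
  (norm_smul_le c x).trans (mul_le_mul hc hx (norm_nonneg _) ((norm_nonneg _).trans hc))

section Exponential

variable {𝔸 : Type*} [NormedRing 𝔸]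

theorem norm_pow_succ_sub_pow_succ_le {x y : 𝔸} {R : ℝ} (hx : ‖x‖ ≤ R) (hy : ‖y‖ ≤ R) (n : ℕ) :
    ‖x ^ (n + 1) - y ^ (n + 1)‖ ≤ (n + 1) * R ^ n * ‖x - y‖ := by
  have hR : 0 ≤ R := (norm_nonneg x).trans hx
  induction n with
  | zero => simp
  | succ n ih =>
    have hyn : ‖y ^ (n + 1)‖ ≤ R ^ (n + 1) :=
      (norm_pow_le' y n.succ_pos).trans (pow_le_pow_left₀ (norm_nonneg _) hy _)
    calc ‖x ^ (n + 1 + 1) - y ^ (n + 1 + 1)‖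
        = ‖x * (x ^ (n + 1) - y ^ (n + 1)) + (x - y) * y ^ (n + 1)‖ := by
          rw [pow_succ' x (n + 1), pow_succ' y (n + 1)]
          noncomm_ring
      _ ≤ ‖x‖ * ‖x ^ (n + 1) - y ^ (n + 1)‖ + ‖x - y‖ * ‖y ^ (n + 1)‖ :=
          norm_add_le_of_le (norm_mul_le _ _) (norm_mul_le _ _)
      _ ≤ R * ((n + 1) * R ^ n * ‖x - y‖) + ‖x - y‖ * R ^ (n + 1) := by gcongr
      _ = ((n + 1 : ℕ) + 1) * R ^ (n + 1) * ‖x - y‖ := by push_cast; ring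

variable [NormedAlgebra ℝ 𝔸] [CompleteSpace 𝔸]

theorem norm_exp_sub_exp_le {x y : 𝔸} {R : ℝ} (hx : ‖x‖ ≤ R) (hy : ‖y‖ ≤ R) :
    ‖exp x - exp y‖ ≤ Real.exp R * ‖x - y‖ := by
  have hdiff : HasSum (fun n : ℕ => ((n + 1).factorial : ℝ)⁻¹ • (x ^ (n + 1) - y ^ (n + 1)))
      (exp x - exp y) := by
    simpa [smul_sub] using (hasSum_nat_add_iff' 1).2
      ((exp_series_hasSum_exp' (𝕂 := ℝ) x).sub (exp_series_hasSum_exp' (𝕂 := ℝ) y))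
  have hbound : HasSum (fun n : ℕ => (n.factorial : ℝ)⁻¹ * R ^ n * ‖x - y‖)
      (Real.exp R * ‖x - y‖) := by
    rw [Real.exp_eq_exp_ℝ]
    exact (exp_series_hasSum_exp' (𝕂 := ℝ) R).mul_right _
  refine hdiff.norm_le_of_bounded hbound fun n => ?_
  calc ‖((n + 1).factorial : ℝ)⁻¹ • (x ^ (n + 1) - y ^ (n + 1))‖
      = ((n + 1).factorial : ℝ)⁻¹ * ‖x ^ (n + 1) - y ^ (n + 1)‖ := by
        rw [norm_smul, Real.norm_of_nonneg (by positivity)]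
    _ ≤ ((n + 1).factorial : ℝ)⁻¹ * ((n + 1) * R ^ n * ‖x - y‖) := by
        gcongr
        exact norm_pow_succ_sub_pow_succ_le hx hy n
    _ = (n.factorial : ℝ)⁻¹ * R ^ n * ‖x - y‖ := by
        rw [Nat.factorial_succ]
        push_cast
        field_simp

theorem norm_exp_le_exp_norm (h1 : ‖(1 : 𝔸)‖ ≤ 1) (x : 𝔸) : ‖exp x‖ ≤ Real.exp ‖x‖ := by
  have hpow (n : ℕ) : ‖x ^ n‖ ≤ ‖x‖ ^ n := by
    rcases n.eq_zero_or_pos with rfl | hn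
    · simpa using h1
    · exact norm_pow_le' x hn
  rw [Real.exp_eq_exp_ℝ]
  refine (exp_series_hasSum_exp' (𝕂 := ℝ) x).norm_le_of_bounded
    (exp_series_hasSum_exp' (𝕂 := ℝ) ‖x‖) fun n => ?_
  rw [norm_smul, Real.norm_of_nonneg (by positivity), smul_eq_mul]
  gcongr
  exact hpow n

theorem exp_mul_exp_neg_self (x : 𝔸) : exp x * exp (-x) = 1 := by
  let _ : NormedAlgebra ℚ 𝔸 := .restrictScalars ℚ ℝ 𝔸
  rw [← exp_add_of_commute (Commute.refl x).neg_right, add_neg_cancel, exp_zero]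

theorem exp_neg_smul_mul_exp_sub_smul (p q : ℝ) (x : 𝔸) :
    exp (-(q • x)) * exp ((q - p) • x) = exp (-(p • x)) := by
  let _ : NormedAlgebra ℚ 𝔸 := .restrictScalars ℚ ℝ 𝔸
  rw [← exp_add_of_commute (((Commute.refl x).smul_left q).smul_right (q - p)).neg_left]
  congr 1
  module

theorem norm_exp_neg_mul_exp_le (h1 : ‖(1 : 𝔸)‖ ≤ 1) {x y : 𝔸} {R : ℝ} (hx : ‖x‖ ≤ R)
    (hy : ‖y‖ ≤ R) : ‖exp (-x) * exp y‖ ≤ Real.exp (Real.exp (2 * R) * ‖y - x‖) := by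
  have hnx : ‖exp (-x)‖ ≤ Real.exp R :=
    (norm_exp_le_exp_norm h1 _).trans (Real.exp_le_exp.2 (by rwa [norm_neg]))
  have hone : exp (-x) * exp x = 1 := by simpa using exp_mul_exp_neg_self (-x)
  calc ‖exp (-x) * exp y‖ = ‖exp (-x) * (exp y - exp x) + 1‖ := by
        rw [mul_sub, hone, sub_add_cancel]
    _ ≤ ‖exp (-x)‖ * ‖exp y - exp x‖ + 1 := norm_add_le_of_le (norm_mul_le _ _) h1
    _ ≤ Real.exp R * (Real.exp R * ‖y - x‖) + 1 := by
        gcongr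
        exact norm_exp_sub_exp_le hy hx
    _ = Real.exp (2 * R) * ‖y - x‖ + 1 := by rw [two_mul, Real.exp_add, mul_assoc]
    _ ≤ Real.exp (Real.exp (2 * R) * ‖y - x‖) := Real.add_one_le_exp _

theorem exists_norm_exp_sub_one_sub_le {ε : ℝ} (hε : 0 < ε) :
    ∃ ρ > 0, ∀ x : 𝔸, ‖x‖ < ρ → ‖exp x - 1 - x‖ ≤ ε * ‖x‖ := by
  obtain ⟨ρ, hρ, hsmall⟩ := Metric.eventually_nhds_iff.1
    ((hasFDerivAt_exp_zero (𝕂 := ℝ) (𝔸 := 𝔸)).isLittleO.def hε)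
  refine ⟨ρ, hρ, fun x hx => ?_⟩
  simpa using hsmall (y := x) (by simpa using hx)

end Exponential

section LocalToGlobal

theorem of_forall_dist_lt_of_midpoint {V : Type*} [SeminormedAddCommGroup V] [NormedSpace ℝ V]
    {J : Set V} (hJ : Convex ℝ J) {R : V → V → Prop} {δ : ℝ} (hδ : 0 < δ)
    (hlocal : ∀ a ∈ J, ∀ b ∈ J, dist a b < δ → R a b)
    (hmid : ∀ a ∈ J, ∀ b ∈ J, R a (midpoint ℝ a b) → R (midpoint ℝ a b) b → R a b)
    {a b : V} (ha : a ∈ J) (hb : b ∈ J) : R a b := by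
  have hdyadic (n : ℕ) : ∀ a ∈ J, ∀ b ∈ J, dist a b < 2 ^ n * δ → R a b := by
    induction n with
    | zero => simpa using hlocal
    | succ n ih =>
      intro a ha b hb hab
      have hm : midpoint ℝ a b ∈ J := hJ.midpoint_mem ha hb
      have hhalf : 2⁻¹ * dist a b < 2 ^ n * δ := by
        rw [pow_succ'] at hab
        linarith
      exact hmid a ha b hb (ih a ha _ hm (by simpa using hhalf))
        (ih _ hm b hb (by simpa using hhalf))
  obtain ⟨n, hn⟩ := pow_unbounded_of_one_lt (dist a b / δ) one_lt_two
  exact hdyadic n a ha b hb ((div_lt_iff₀ hδ).1 hn)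

theorem abs_sub_add_abs_sub_of_monotoneOn {v : ℝ → ℝ} {J : Set ℝ} (hv : MonotoneOn v J)
    {a b m : ℝ} (ha : a ∈ J) (hb : b ∈ J) (hmJ : m ∈ J) (hm : m ∈ uIcc a b) :
    |v m - v a| + |v b - v m| = |v b - v a| := by
  rcases mem_uIcc.1 hm with ⟨ham, hmb⟩ | ⟨hbm, hma⟩
  · have := hv ha hmJ ham
    have := hv hmJ hb hmb
    grind
  · have := hv hb hmJ hbm
    have := hv hmJ ha hma
    grind

theorem le_exp_mul_add_of_forall_dist_lt {J : Set ℝ} (hJ : Convex ℝ J) {z v l : ℝ → ℝ}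
    (hv : MonotoneOn v J) (hl : MonotoneOn l J) {C c δ : ℝ} (hC : 0 ≤ C) (hc : 0 ≤ c) (hδ : 0 < δ)
    (hlocal : ∀ a ∈ J, ∀ b ∈ J, dist a b < δ →
      z b ≤ Real.exp (C * |v b - v a|) * (z a + c * |l b - l a|))
    {s t : ℝ} (hs : s ∈ J) (ht : t ∈ J) :
    z t ≤ Real.exp (C * |v t - v s|) * (z s + c * |l t - l s|) := by
  refine of_forall_dist_lt_of_midpoint (R := fun a b =>
    z b ≤ Real.exp (C * |v b - v a|) * (z a + c * |l b - l a|)) hJ hδ hlocal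
    (fun a ha b hb ham hmb => ?_) hs ht
  set m := midpoint ℝ a b
  have hmJ : m ∈ J := hJ.midpoint_mem ha hb
  have hm : m ∈ uIcc a b := segment_eq_uIcc a b ▸ midpoint_mem_segment a b
  have hvm := abs_sub_add_abs_sub_of_monotoneOn hv ha hb hmJ hm
  have hlm := abs_sub_add_abs_sub_of_monotoneOn hl ha hb hmJ hm
  have hlb : c * |l b - l m| ≤ Real.exp (C * |v m - v a|) * (c * |l b - l m|) :=
    le_mul_of_one_le_left (by positivity) (Real.one_le_exp (by positivity))
  calc z b ≤ Real.exp (C * |v b - v m|) * (z m + c * |l b - l m|) := hmb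
    _ ≤ Real.exp (C * |v b - v m|) * (Real.exp (C * |v m - v a|) * (z a + c * |l m - l a|)
          + Real.exp (C * |v m - v a|) * (c * |l b - l m|)) :=
        mul_le_mul_of_nonneg_left (add_le_add ham hlb) (Real.exp_nonneg _)
    _ = Real.exp (C * |v b - v a|) * (z a + c * |l b - l a|) := by
        rw [← hvm, ← hlm, mul_add C, Real.exp_add]
        ring

end LocalToGlobal

section BoundedVariation

variable {F : Type*} [NormedAddCommGroup F] {G : ℝ → F} {I : Set ℝ}

theorem boundedVariationOn_of_bddAbove_varSums (h : BddAbove (varSums G I)) :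
    BoundedVariationOn G I := by
  obtain ⟨B, hB⟩ := h
  refine ne_top_of_le_ne_top ENNReal.ofReal_ne_top (b := ENNReal.ofReal B) ?_
  rw [eVariationOn.eVariationOn_eq_strictMonoOn]
  refine iSup_le fun ⟨n, a, ha, haI⟩ => ?_
  have hsum : ∑ i ∈ Finset.range n, ‖G (a (i + 1)) - G (a i)‖ ≤ B :=
    hB ⟨n, a, haI, fun i hi => ha hi.le hi i.lt_succ_self, rfl⟩
  simp only [edist_dist, dist_eq_norm]
  rw [← ENNReal.ofReal_sum_of_nonneg fun _ _ => norm_nonneg _]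
  exact ENNReal.ofReal_le_ofReal hsum

theorem isBounded_image_of_boundedVariationOn (h : BoundedVariationOn G I) :
    Bornology.IsBounded (G '' I) := by
  refine Metric.isBounded_iff.2 ⟨(eVariationOn G I).toReal, ?_⟩
  rintro _ ⟨a, ha, rfl⟩ _ ⟨b, hb, rfl⟩
  exact h.dist_le ha hb

theorem norm_sub_le_abs_variationOnFromTo (h : LocallyBoundedVariationOn G I) {a b : ℝ}
    (ha : a ∈ I) (hb : b ∈ I) : ‖G b - G a‖ ≤ |variationOnFromTo G I a b| := by
  wlog hab : a ≤ b generalizing a b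
  · rw [norm_sub_rev, variationOnFromTo.eq_neg_swap, abs_neg]
    exact this hb ha (le_of_not_ge hab)
  rw [abs_of_nonneg (variationOnFromTo.nonneg_of_le G I hab), variationOnFromTo.eq_of_le G I hab,
    ← dist_eq_norm]
  exact BoundedVariationOn.dist_le (h a b ha hb) ⟨hb, hab, le_rfl⟩ ⟨ha, le_rfl, hab⟩

end BoundedVariation

section Primitive

variable {F : Type*} [NormedAddCommGroup F] [NormedSpace ℝ F] {Φ φ : ℝ → F} {I J : Set ℝ}

/-- `Φ` is an indefinite Bochner integral of `φ` on `I`: the integral form of `Φ' = φ`. For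
`φ = A Φ` it says that `Φ` is a Carathéodory solution of the linear equation with coefficient `A`.
Local integrability of `φ` is included, since the integral would otherwise be `0` by convention. -/
def IsPrimitiveOn (Φ φ : ℝ → F) (I : Set ℝ) : Prop :=
  ∀ a ∈ I, ∀ b ∈ I, IntervalIntegrable φ volume a b ∧ Φ b - Φ a = ∫ τ in a..b, φ τ

theorem IsPrimitiveOn.mono (h : IsPrimitiveOn Φ φ I) (hJI : J ⊆ I) : IsPrimitiveOn Φ φ J :=
  fun a ha b hb => h a (hJI ha) b (hJI hb)

theorem IsPrimitiveOn.congr (h : IsPrimitiveOn Φ φ I) (hI : I.OrdConnected) {ψ : ℝ → F}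
    (hφψ : EqOn φ ψ I) : IsPrimitiveOn Φ ψ I := by
  intro a ha b hb
  obtain ⟨hint, heq⟩ := h a ha b hb
  have hab : EqOn φ ψ (uIcc a b) := hφψ.mono (hI.uIcc_subset ha hb)
  exact ⟨hint.congr (hab.mono uIoc_subset_uIcc), heq.trans (integral_congr hab)⟩

theorem IsPrimitiveOn.continuousOn {s t : ℝ} (h : IsPrimitiveOn Φ φ (uIcc s t)) :
    ContinuousOn Φ (uIcc s t) := by
  have hint := (h s left_mem_uIcc t right_mem_uIcc).1
  refine ((continuousOn_primitive_interval' hint left_mem_uIcc).const_add (Φ s)).congr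
    fun τ hτ => ?_
  simp only [← (h s left_mem_uIcc τ hτ).2, add_sub_cancel]

theorem IsPrimitiveOn.norm_sub_le (h : IsPrimitiveOn Φ φ I) {a b : ℝ} (ha : a ∈ I) (hb : b ∈ I) :
    ‖Φ b - Φ a‖ ≤ |∫ τ in a..b, ‖φ τ‖| := by
  rw [(h a ha b hb).2]
  exact norm_integral_le_abs_integral_norm

theorem monotoneOn_integral_of_nonneg {g : ℝ → ℝ} (hg : ∀ τ, 0 ≤ g τ) {s : ℝ} (hs : s ∈ I)
    (hint : ∀ a ∈ I, ∀ b ∈ I, IntervalIntegrable g volume a b) :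
    MonotoneOn (fun τ => ∫ x in s..τ, g x) I := by
  intro a ha b hb hab
  rw [← sub_nonneg, integral_interval_sub_left (hint s hs b hb) (hint s hs a ha)]
  exact integral_nonneg hab fun τ _ => hg τ

theorem norm_integral_smul_sub_smul_le [CompleteSpace F] {p : ℝ → ℝ} {y : ℝ → F} {a b ε : ℝ}
    (hp : IntervalIntegrable p volume a b) (hy : ContinuousOn y (uIcc a b))
    (hε : ∀ τ ∈ uIcc a b, ‖y τ - y a‖ ≤ ε) :
    ‖(∫ τ in a..b, p τ • y τ) - (∫ τ in a..b, p τ) • y a‖ ≤ ε * |∫ τ in a..b, ‖p τ‖| := by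
  have hε0 : 0 ≤ ε := (norm_nonneg _).trans (hε a left_mem_uIcc)
  calc ‖(∫ τ in a..b, p τ • y τ) - (∫ τ in a..b, p τ) • y a‖
      = ‖∫ τ in a..b, p τ • (y τ - y a)‖ := by
        rw [← intervalIntegral.integral_smul_const, ← intervalIntegral.integral_sub
          (hp.smul_continuousOn hy) (hp.smul_continuousOn continuousOn_const)]
        simp only [smul_sub]
    _ ≤ |∫ τ in a..b, ε * ‖p τ‖| := by
        refine norm_integral_le_abs_of_norm_le ?_ (hp.norm.const_mul ε)
        refine ae_restrict_of_forall_mem measurableSet_uIoc fun τ hτ => ?_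
        rw [norm_smul, mul_comm]
        gcongr
        exact hε τ (uIoc_subset_uIcc hτ)
    _ = ε * |∫ τ in a..b, ‖p τ‖| := by
        rw [intervalIntegral.integral_const_mul, abs_mul, abs_of_nonneg hε0]

end Primitive

section AbsoluteContinuity

variable {f f' : ℝ → ℝ} {I : Set ℝ} {a b : ℝ}

theorem AbsolutelyContinuousOn.absolutelyContinuousOnInterval
    (h : AbsolutelyContinuousOn f (uIcc a b)) : AbsolutelyContinuousOnInterval f a b := by
  refine (absolutelyContinuousOnInterval_iff f a b).2 fun ε hε => ?_
  obtain ⟨δ, hδ, hsum⟩ := h ε hε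
  refine ⟨δ, hδ, fun ⟨n, E⟩ ⟨hmem, hdisj⟩ hlen => ?_⟩
  simp only [Finset.mem_range] at hmem
  have habs (u v : ℝ) : |f (max u v) - f (min u v)| = dist (f u) (f v) := by
    rcases le_total u v with huv | huv <;> simp [huv, Real.dist_eq, abs_sub_comm]
  have key := hsum n (fun i => min (E i).1 (E i).2) (fun i => max (E i).1 (E i).2)
    (fun i hi => ?_) (fun i hi j hj hij => ?_) ?_
  · simpa only [habs] using key
  · obtain ⟨hl, hr⟩ := hmem i hi
    exact ⟨min_rec' (· ∈ uIcc a b) hl hr, max_rec' (· ∈ uIcc a b) hl hr, min_le_max⟩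
  · exact disjoint_iff_inter_eq_empty.1 <|
      (hdisj (by simpa using hi) (by simpa using hj) hij).mono Ioo_subset_Ioc_self
        Ioo_subset_Ioc_self
  · simpa only [max_sub_min_eq_abs', ← Real.dist_eq] using hlen

theorem LocallyAbsolutelyContinuousOn.absolutelyContinuousOnInterval
    (h : LocallyAbsolutelyContinuousOn f I) (ha : a ∈ I) (hb : b ∈ I) :
    AbsolutelyContinuousOnInterval f a b :=
  AbsolutelyContinuousOn.absolutelyContinuousOnInterval <|
    h _ (min_rec' (· ∈ I) ha hb) _ (max_rec' (· ∈ I) ha hb)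

theorem IsDerivWithinOf.eqOn_deriv (h : IsDerivWithinOf f' f I) :
    EqOn (deriv f) f' (interior I) := by
  intro x hx
  have hnhds : I ∈ nhds x := mem_interior_iff_mem_nhds.1 hx
  obtain ⟨hdiff, hzero⟩ := h x (interior_subset hx)
  by_cases hd : DifferentiableAt ℝ f x
  · exact ((hdiff hd.differentiableWithinAt).hasDerivAt hnhds).deriv
  · rw [deriv_zero_of_not_differentiableAt hd, hzero fun hw => hd (hw.differentiableAt hnhds)]

theorem IsDerivWithinOf.isPrimitiveOn (h : IsDerivWithinOf f' f I) (hI : I.OrdConnected)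
    (hf : LocallyAbsolutelyContinuousOn f I) : IsPrimitiveOn f f' I := by
  intro a ha b hb
  have hac := hf.absolutelyContinuousOnInterval ha hb
  have heq : EqOn (deriv f) f' (uIoo a b) :=
    h.eqOn_deriv.mono (interior_maximal (uIoo_subset_uIcc_self.trans (hI.uIcc_subset ha hb))
      isOpen_Ioo)
  refine ⟨hac.intervalIntegrable_deriv.congr_uIoo heq, ?_⟩
  rw [← integral_congr_uIoo heq, hac.integral_deriv_eq_sub]

end AbsoluteContinuity

section LinearEquation

variable {E : Type*} [NormedAddCommGroup E] [NormedSpace ℝ E]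

theorem IsEvolutionOperator.isPrimitiveOn_apply {I : Set ℝ} {A : ℝ → E →L[ℝ] E}
    {X : ℝ → ℝ → E →L[ℝ] E} (hX : IsEvolutionOperator I A X) (hI : I.OrdConnected)
    (hA : ∀ a ∈ I, ∀ b ∈ I, IntervalIntegrable A volume a b) {s : ℝ} (hs : s ∈ I) (e : E) :
    IsPrimitiveOn (fun t => X t s e) (fun τ => A τ (X τ s e)) I := by
  intro a ha b hb
  obtain ⟨hcont, -, heq⟩ := hX s hs
  have hint : IntervalIntegrable (fun τ => (A τ).comp (X τ s)) volume a b :=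
    (hA a ha b hb).mul_continuousOn (hcont.mono (hI.uIcc_subset ha hb))
  refine ⟨⟨(ContinuousLinearMap.apply ℝ E e).integrable_comp hint.1,
    (ContinuousLinearMap.apply ℝ E e).integrable_comp hint.2⟩, ?_⟩
  simp only [← sub_apply, heq a ha b hb, ContinuousLinearMap.intervalIntegral_apply hint,
    ContinuousLinearMap.comp_apply]

variable [CompleteSpace E] {f f' : ℝ → ℝ} {G : ℝ → E →L[ℝ] E} {x : ℝ → E}
  {I : Set ℝ} {M K s t : ℝ}

theorem norm_exp_neg_smul_apply_le {S T : E →L[ℝ] E} {q : ℝ} (hq : ‖q‖ ≤ M) (hS : ‖S‖ ≤ K)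
    (hT : ‖T‖ ≤ K) (p : ℝ) (x y : E) :
    ‖exp (-(q • T)) y‖ ≤ Real.exp (Real.exp (2 * (M * K)) * M * ‖T - S‖) *
      (‖exp (-(p • S)) x‖ + Real.exp (M * K) * ‖y - exp ((q - p) • S) x‖) := by
  have h1 : ‖(1 : E →L[ℝ] E)‖ ≤ 1 := ContinuousLinearMap.norm_id_le
  have hqS : ‖q • S‖ ≤ M * K := norm_smul_le_of_le hq hS
  have hqT : ‖q • T‖ ≤ M * K := norm_smul_le_of_le hq hT
  have hexp : ‖exp (-(q • S))‖ ≤ Real.exp (M * K) :=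
    (norm_exp_le_exp_norm h1 _).trans (Real.exp_le_exp.2 (by rwa [norm_neg]))
  have htrans : exp (-(q • S)) (exp ((q - p) • S) x) = exp (-(p • S)) x :=
    DFunLike.congr_fun (exp_neg_smul_mul_exp_sub_smul p q S) x
  have hsplit : exp (-(q • S)) y =
      exp (-(p • S)) x + exp (-(q • S)) (y - exp ((q - p) • S) x) := by
    rw [map_sub, htrans, add_sub_cancel]
  have hchange : ‖exp (-(q • T)) * exp (q • S)‖ ≤
      Real.exp (Real.exp (2 * (M * K)) * M * ‖T - S‖) := by
    refine (norm_exp_neg_mul_exp_le h1 hqT hqS).trans (Real.exp_le_exp.2 ?_)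
    rw [mul_assoc, ← smul_sub, norm_sub_rev T]
    gcongr
    exact norm_smul_le_of_le hq le_rfl
  calc ‖exp (-(q • T)) y‖ = ‖(exp (-(q • T)) * exp (q • S)) (exp (-(q • S)) y)‖ := by
        rw [← mul_apply_eq_comp, mul_assoc, exp_mul_exp_neg_self, mul_one]
    _ ≤ Real.exp (Real.exp (2 * (M * K)) * M * ‖T - S‖) * ‖exp (-(q • S)) y‖ :=
        ContinuousLinearMap.le_of_opNorm_le _ hchange _
    _ ≤ Real.exp (Real.exp (2 * (M * K)) * M * ‖T - S‖) *
          (‖exp (-(p • S)) x‖ + Real.exp (M * K) * ‖y - exp ((q - p) • S) x‖) := by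
        rw [hsplit]
        gcongr
        exact norm_add_le_of_le le_rfl (ContinuousLinearMap.le_of_opNorm_le _ hexp _)

section CompactInterval

variable (hG : ContinuousOn G (uIcc s t)) (hf : IsPrimitiveOn f f' (uIcc s t))
include hG hf

theorem exists_norm_sub_sub_smul_apply_le
    (hx : IsPrimitiveOn x (fun τ => f' τ • G τ (x τ)) (uIcc s t)) {ε : ℝ} (hε : 0 < ε) :
    ∃ δ > 0, ∀ a ∈ uIcc s t, ∀ b ∈ uIcc s t, dist a b < δ →
      ‖x b - x a - (f b - f a) • G a (x a)‖ ≤ ε * |∫ τ in a..b, ‖f' τ‖| := by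
  have hGx : ContinuousOn (fun τ => G τ (x τ)) (uIcc s t) := hG.clm_apply hx.continuousOn
  obtain ⟨δ, hδ, hosc⟩ := Metric.uniformContinuousOn_iff.1
    (isCompact_uIcc.uniformContinuousOn_of_continuous hGx) ε hε
  refine ⟨δ, hδ, fun a ha b hb hab => ?_⟩
  have hsub : uIcc a b ⊆ uIcc s t := uIcc_subset_uIcc ha hb
  obtain ⟨hint, hfab⟩ := hf a ha b hb
  rw [(hx a ha b hb).2, hfab]
  refine norm_integral_smul_sub_smul_le hint (hGx.mono hsub) fun τ hτ => ?_
  have hτa : dist τ a < δ :=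
    (abs_sub_left_of_mem_uIcc hτ).trans_lt (by rwa [← Real.dist_eq, dist_comm])
  exact (dist_eq_norm (G τ (x τ)) _ ▸ hosc τ (hsub hτ) a ha hτa).le

theorem exists_norm_exp_smul_sub_one_sub_le {ε : ℝ} (hε : 0 < ε) :
    ∃ δ > 0, ∀ a ∈ uIcc s t, ∀ b ∈ uIcc s t, dist a b < δ →
      ‖exp ((f b - f a) • G a) - 1 - (f b - f a) • G a‖ ≤ ε * |∫ τ in a..b, ‖f' τ‖| := by
  obtain ⟨K, hK⟩ := isCompact_uIcc.exists_bound_of_continuousOn hG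
  have hK0 : 0 ≤ K := (norm_nonneg _).trans (hK s left_mem_uIcc)
  obtain ⟨ρ, hρ, hexp⟩ := exists_norm_exp_sub_one_sub_le (𝔸 := E →L[ℝ] E)
    (show 0 < ε / (K + 1) by positivity)
  obtain ⟨δ, hδ, hosc⟩ := Metric.uniformContinuousOn_iff.1
    (isCompact_uIcc.uniformContinuousOn_of_continuous hf.continuousOn) (ρ / (K + 1))
    (by positivity)
  refine ⟨δ, hδ, fun a ha b hb hab => ?_⟩
  have hu : ‖(f b - f a) • G a‖ ≤ |f b - f a| * (K + 1) := by
    rw [norm_smul, Real.norm_eq_abs]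
    gcongr
    linarith [hK a ha]
  have hfab : |f b - f a| * (K + 1) < ρ :=
    (lt_div_iff₀ (by positivity)).1 (hosc b hb a ha (by rwa [dist_comm]))
  calc ‖exp ((f b - f a) • G a) - 1 - (f b - f a) • G a‖
      ≤ ε / (K + 1) * ‖(f b - f a) • G a‖ := hexp _ (hu.trans_lt hfab)
    _ ≤ ε / (K + 1) * (|f b - f a| * (K + 1)) := by gcongr
    _ = ε * |f b - f a| := by field_simp
    _ ≤ ε * |∫ τ in a..b, ‖f' τ‖| := mul_le_mul_of_nonneg_left (hf.norm_sub_le ha hb) hε.le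

theorem exists_norm_sub_exp_smul_apply_le
    (hx : IsPrimitiveOn x (fun τ => f' τ • G τ (x τ)) (uIcc s t)) {ε : ℝ} (hε : 0 < ε) :
    ∃ δ > 0, ∀ a ∈ uIcc s t, ∀ b ∈ uIcc s t, dist a b < δ →
      ‖x b - exp ((f b - f a) • G a) (x a)‖ ≤ ε * |∫ τ in a..b, ‖f' τ‖| := by
  obtain ⟨S, hS⟩ := isCompact_uIcc.exists_bound_of_continuousOn hx.continuousOn
  have hS0 : 0 ≤ S := (norm_nonneg _).trans (hS s left_mem_uIcc)
  obtain ⟨δ₁, hδ₁, hsol⟩ := exists_norm_sub_sub_smul_apply_le hG hf hx (half_pos hε)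
  obtain ⟨δ₂, hδ₂, hexp⟩ := exists_norm_exp_smul_sub_one_sub_le hG hf
    (show 0 < ε / 2 / (S + 1) by positivity)
  refine ⟨min δ₁ δ₂, lt_min hδ₁ hδ₂, fun a ha b hb hab => ?_⟩
  set L := |∫ τ in a..b, ‖f' τ‖|
  have hsol' := hsol a ha b hb (hab.trans_le (min_le_left _ _))
  have hexp' := hexp a ha b hb (hab.trans_le (min_le_right _ _))
  calc ‖x b - exp ((f b - f a) • G a) (x a)‖
      = ‖(x b - x a - (f b - f a) • G a (x a)) -
          (exp ((f b - f a) • G a) - 1 - (f b - f a) • G a) (x a)‖ := by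
        congr 1
        simp only [sub_apply, smul_apply, one_apply_eq_self]
        abel
    _ ≤ ε / 2 * L + ε / 2 / (S + 1) * L * (S + 1) :=
        norm_sub_le_of_le hsol' <| (ContinuousLinearMap.le_of_opNorm_le _ hexp' _).trans
          (by gcongr; linarith [hS a ha])
    _ = ε * L := by field_simp; ring

end CompactInterval

section BoundedVariationCoefficient

variable (hI : I.OrdConnected) (hG : ContinuousOn G I) (hGv : BoundedVariationOn G I)
  (hf : IsPrimitiveOn f f' I) (hx : IsPrimitiveOn x (fun τ => f' τ • G τ (x τ)) I)
  (hfM : ∀ a ∈ I, ‖f a‖ ≤ M) (hGK : ∀ a ∈ I, ‖G a‖ ≤ K) (hs : s ∈ I) (ht : t ∈ I)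
include hI hG hGv hf hx hfM hGK hs ht

theorem norm_exp_neg_smul_apply_le_add {ε : ℝ} (hε : 0 < ε) :
    ‖exp (-(f t • G t)) (x t)‖ ≤
      Real.exp (Real.exp (2 * (M * K)) * M * (eVariationOn G I).toReal) *
        (‖exp (-(f s • G s)) (x s)‖ + Real.exp (M * K) * (ε * |∫ τ in s..t, ‖f' τ‖|)) := by
  have hsub : uIcc s t ⊆ I := hI.uIcc_subset hs ht
  have hGloc := hGv.locallyBoundedVariationOn
  have hM : 0 ≤ M := (norm_nonneg _).trans (hfM s hs)
  have hfint (a) (ha : a ∈ I) (b) (hb : b ∈ I) : IntervalIntegrable (‖f' ·‖) volume a b :=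
    (hf a ha b hb).1.norm
  have hV {a b : ℝ} (ha : a ∈ I) (hb : b ∈ I) :
      variationOnFromTo G I s b - variationOnFromTo G I s a = variationOnFromTo G I a b :=
    variationOnFromTo.sub_right hGloc hs hb ha
  have hL {a b : ℝ} (ha : a ∈ I) (hb : b ∈ I) :
      (∫ τ in s..b, ‖f' τ‖) - (∫ τ in s..a, ‖f' τ‖) = ∫ τ in a..b, ‖f' τ‖ :=
    integral_interval_sub_left (hfint s hs b hb) (hfint s hs a ha)
  obtain ⟨δ, hδ, hstep⟩ := exists_norm_sub_exp_smul_apply_le (hG.mono hsub) (hf.mono hsub)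
    (hx.mono hsub) hε
  have hglobal := le_exp_mul_add_of_forall_dist_lt (convex_uIcc s t)
    (z := fun τ => ‖exp (-(f τ • G τ)) (x τ)‖) (C := Real.exp (2 * (M * K)) * M)
    (c := Real.exp (M * K) * ε) ((variationOnFromTo.monotoneOn hGloc hs).mono hsub)
    ((monotoneOn_integral_of_nonneg (fun _ => norm_nonneg _) hs hfint).mono hsub)
    (by positivity) (by positivity) hδ (fun a ha b hb hab => ?_) left_mem_uIcc right_mem_uIcc
  · rw [hV hs ht, hL hs ht] at hglobal
    refine hglobal.trans ?_
    rw [mul_assoc (Real.exp (M * K))]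
    gcongr
    exact variationOnFromTo.abs_le_eVariationOn hGv
  · have haI := hsub ha
    have hbI := hsub hb
    rw [hV haI hbI, hL haI hbI, mul_assoc (Real.exp (M * K))]
    refine (norm_exp_neg_smul_apply_le (hfM b hbI) (hGK a haI) (hGK b hbI) (f a) (x a)
      (x b)).trans ?_
    gcongr
    exacts [norm_sub_le_abs_variationOnFromTo hGloc haI hbI, hstep a ha b hb hab]

theorem norm_exp_neg_smul_apply_le_of_isPrimitiveOn :
    ‖exp (-(f t • G t)) (x t)‖ ≤
      Real.exp (Real.exp (2 * (M * K)) * M * (eVariationOn G I).toReal) *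
        ‖exp (-(f s • G s)) (x s)‖ := by
  have hlim : Filter.Tendsto (fun ε : ℝ =>
      Real.exp (Real.exp (2 * (M * K)) * M * (eVariationOn G I).toReal) *
        (‖exp (-(f s • G s)) (x s)‖ + Real.exp (M * K) * (ε * |∫ τ in s..t, ‖f' τ‖|)))
      (nhdsWithin 0 (Ioi 0)) (nhds _) :=
    (Continuous.tendsto (by fun_prop) 0).mono_left nhdsWithin_le_nhds
  rw [zero_mul, mul_zero, add_zero] at hlim
  exact ge_of_tendsto hlim <| eventually_mem_nhdsWithin.mono fun _ hε =>
    norm_exp_neg_smul_apply_le_add hI hG hGv hf hx hfM hGK hs ht hε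

theorem norm_le_of_isPrimitiveOn :
    ‖x t‖ ≤ Real.exp (M * K) *
      (Real.exp (Real.exp (2 * (M * K)) * M * (eVariationOn G I).toReal) *
        (Real.exp (M * K) * ‖x s‖)) := by
  have hexp {S : E →L[ℝ] E} (hS : ‖S‖ ≤ M * K) : ‖exp S‖ ≤ Real.exp (M * K) :=
    (norm_exp_le_exp_norm ContinuousLinearMap.norm_id_le S).trans (Real.exp_le_exp.2 hS)
  have hfG (a) (ha : a ∈ I) : ‖f a • G a‖ ≤ M * K :=
    norm_smul_le_of_le (hfM a ha) (hGK a ha)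
  have hback : exp (f t • G t) (exp (-(f t • G t)) (x t)) = x t :=
    DFunLike.congr_fun (exp_mul_exp_neg_self (f t • G t)) (x t)
  calc ‖x t‖ = ‖exp (f t • G t) (exp (-(f t • G t)) (x t))‖ := by rw [hback]
    _ ≤ Real.exp (M * K) * ‖exp (-(f t • G t)) (x t)‖ :=
        ContinuousLinearMap.le_of_opNorm_le _ (hexp (hfG t ht)) _
    _ ≤ Real.exp (M * K) *
          (Real.exp (Real.exp (2 * (M * K)) * M * (eVariationOn G I).toReal) *
            ‖exp (-(f s • G s)) (x s)‖) := by
        gcongr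
        exact norm_exp_neg_smul_apply_le_of_isPrimitiveOn hI hG hGv hf hx hfM hGK hs ht
    _ ≤ Real.exp (M * K) *
          (Real.exp (Real.exp (2 * (M * K)) * M * (eVariationOn G I).toReal) *
            (Real.exp (M * K) * ‖x s‖)) := by
        gcongr
        exact ContinuousLinearMap.le_of_opNorm_le _ (hexp (by rw [norm_neg]; exact hfG s hs)) _

end BoundedVariationCoefficient

end LinearEquation

/-- If `G̃ : I → End(E)` is continuous and of bounded variation and
`f ∈ AC_loc(I)` has bounded image, then `A(t) = f'(t) G̃(t)` is bistable in `E`. -/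
theorem stmt11 {E : Type*} [NormedAddCommGroup E] [NormedSpace ℝ E] [CompleteSpace E]
    (I : Set ℝ) (hI : I.OrdConnected)
    (Gt : ℝ → E →L[ℝ] E) (hGc : ContinuousOn Gt I)
    (hBV : BddAbove (varSums Gt I))
    (f f' : ℝ → ℝ)
    (hf : LocallyAbsolutelyContinuousOn f I)
    (hf' : IsDerivWithinOf f' f I)
    (hbd : Bornology.IsBounded (f '' I))
    (A : ℝ → E →L[ℝ] E) (hA : ∀ t ∈ I, A t = f' t • Gt t) :
    ∃ C > (0 : ℝ), ∀ X, IsEvolutionOperator I A X →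
      ∀ s ∈ I, ∀ t ∈ I, ‖X t s‖ ≤ C := by
  have hGv := boundedVariationOn_of_bddAbove_varSums hBV
  have hfp : IsPrimitiveOn f f' I := hf'.isPrimitiveOn hI hf
  obtain ⟨M, hM⟩ := hbd.exists_norm_le
  obtain ⟨K, hK⟩ := (isBounded_image_of_boundedVariationOn hGv).exists_norm_le
  rw [forall_mem_image] at hM hK
  have hAint (a) (ha : a ∈ I) (b) (hb : b ∈ I) : IntervalIntegrable A volume a b :=
    have hsub := hI.uIcc_subset ha hb
    ((hfp a ha b hb).1.smul_continuousOn (hGc.mono hsub)).congr fun τ hτ =>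
      (hA τ (hsub (uIoc_subset_uIcc hτ))).symm
  refine ⟨Real.exp (M * K) * (Real.exp (Real.exp (2 * (M * K)) * M *
    (eVariationOn Gt I).toReal) * Real.exp (M * K)), by positivity, fun X hX s hs t ht => ?_⟩
  refine ContinuousLinearMap.opNorm_le_bound _ (by positivity) fun e => ?_
  have hx : IsPrimitiveOn (X · s e) (fun τ => f' τ • Gt τ (X τ s e)) I :=
    (hX.isPrimitiveOn_apply hI hAint hs e).congr hI fun τ hτ => by
      simp only [hA τ hτ, smul_apply]
  have hXs : X s s e = e := by rw [(hX s hs).2.1, ContinuousLinearMap.id_apply]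
  simpa only [hXs, mul_assoc] using norm_le_of_isPrimitiveOn hI hGc hGv hfp hx hM hK hs ht
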